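/- arXiv:2403.00595 — 2 statements merged into one kernel-verified Lean document; each statement's English description precedes it below -/
import Mathlib

section
/- Let G be a finite connected nonempty graph on n vertices. Then G has a connected dominating set of size at most n − Δ(G), where Δ(G) is the maximum degree of G; in particular γ_c(G) ≤ n − Δ(G). -/
/-!
The set is grown greedily. For a set `S`, let `N[S]` be its closed neighbourhood, and consider the
nonempty connected `S` with `|S| + Δ ≤ |N[S]|`; a single vertex of maximum degree is one. If `N[S]`
is not everything, connectivity of `G` gives an edge `uw` with `u ∈ N[S]` and `w ∉ N[S]`. Then
`S ∪ {u}` is still connected and its closed neighbourhood contains the new vertex `w`, so the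
inequality persists. Hence an `S` of maximum size has `N[S] = V`: it is dominating, and
`|S| + Δ ≤ n`.
-/

/-- `S` is a dominating set of `G`: every vertex is in `S` or adjacent to a vertex of `S`. -/
def IsDominatingSet {V : Type*} (G : SimpleGraph V) (S : Finset V) : Prop :=
  ∀ v : V, v ∈ S ∨ ∃ u ∈ S, G.Adj u v

/-- `S` is a connected dominating set of `G`: a dominating set inducing a connected subgraph. -/
def IsConnectedDominatingSet {V : Type*} (G : SimpleGraph V) (S : Finset V) : Prop :=
  IsDominatingSet G S ∧ (G.induce (S : Set V)).Connected

/-- The connected domination number of `G`. -/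
noncomputable def connectedDominationNumber {V : Type*} (G : SimpleGraph V) : ℕ :=
  sInf {n : ℕ | ∃ S : Finset V, IsConnectedDominatingSet G S ∧ S.card = n}

open Classical in
/-- The closed neighbourhood `N[S]`: the vertices that lie in `S` or are adjacent to a vertex of
`S`. -/
noncomputable def closedNbhd {V : Type*} [Fintype V] (G : SimpleGraph V) (S : Finset V) :
    Finset V :=
  Finset.univ.filter fun v => v ∈ S ∨ ∃ u ∈ S, G.Adj u v

theorem mem_closedNbhd {V : Type*} [Fintype V] {G : SimpleGraph V} {S : Finset V} {v : V} :
    v ∈ closedNbhd G S ↔ v ∈ S ∨ ∃ u ∈ S, G.Adj u v := by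
  simp [closedNbhd]

theorem card_closedNbhd_singleton {V : Type*} [Fintype V] (G : SimpleGraph V)
    [DecidableRel G.Adj] (v : V) : (closedNbhd G {v}).card = G.degree v + 1 := by
  classical
  have h : closedNbhd G {v} = insert v (G.neighborFinset v) := by
    ext w
    simp [mem_closedNbhd]
  rw [h, Finset.card_insert_of_notMem (by simp), SimpleGraph.card_neighborFinset_eq_degree]

/-- The greedy step: a connected set that does not dominate can be enlarged by one vertex so that it
stays connected and its closed neighbourhood grows by at least one vertex. -/
theorem exists_insert_connected {V : Type*} [Fintype V] [DecidableEq V] {G : SimpleGraph V}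
    (hG : G.Connected) {S : Finset V} (hS : (G.induce (S : Set V)).Connected)
    (hdom : ¬ IsDominatingSet G S) :
    ∃ u ∉ S, (G.induce ((insert u S : Finset V) : Set V)).Connected ∧
      (closedNbhd G S).card + 1 ≤ (closedNbhd G (insert u S)).card := by
  obtain ⟨x, hx⟩ := not_forall.1 hdom
  obtain ⟨⟨s, hs⟩⟩ := hS.nonempty
  rw [← mem_closedNbhd] at hx
  obtain ⟨p⟩ := hG.preconnected s x
  obtain ⟨⟨⟨u, w⟩, huw⟩, -, hu, hw⟩ := p.exists_boundary_dart (closedNbhd G S : Set V)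
    (by simpa using mem_closedNbhd.2 (Or.inl (by simpa using hs))) (by simpa using hx)
  simp only [Finset.mem_coe] at hu hw huw
  have huS : u ∉ S := fun h => hw (mem_closedNbhd.2 (Or.inr ⟨u, h, huw⟩))
  obtain ⟨t, ht, htu⟩ := (mem_closedNbhd.1 hu).resolve_left huS
  refine ⟨u, huS, ?_, ?_⟩
  · have h := SimpleGraph.induce_union_connected
      (SimpleGraph.induce_pair_connected_of_adj htu).preconnected hS.preconnected
      ⟨t, by simp, by simpa using ht⟩
    convert h using 2 <;> grind
  · refine Finset.card_lt_card (Finset.ssubset_iff_subset_ne.2 ⟨fun v hv => ?_, fun h => ?_⟩)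
    · rw [mem_closedNbhd] at hv ⊢
      grind
    · exact hw (h ▸ mem_closedNbhd.2 (Or.inr ⟨u, Finset.mem_insert_self u S, huw⟩))

theorem stmt_0 {V : Type*} [Fintype V] [Nonempty V] (G : SimpleGraph V)
    [DecidableRel G.Adj] (hG : G.Connected) :
    (∃ S : Finset V, IsConnectedDominatingSet G S ∧
        S.card ≤ Fintype.card V - G.maxDegree) ∧
    connectedDominationNumber G ≤ Fintype.card V - G.maxDegree := by
  classical
  have key : ∃ S : Finset V, IsConnectedDominatingSet G S ∧
      S.card ≤ Fintype.card V - G.maxDegree := by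
    obtain ⟨v, hv⟩ := G.exists_maximal_degree_vertex
    let F : Finset (Finset V) := Finset.univ.filter fun S =>
      (G.induce (S : Set V)).Connected ∧ S.card + G.maxDegree ≤ (closedNbhd G S).card
    have hF : F.Nonempty := by
      refine ⟨{v}, Finset.mem_filter.2 ⟨Finset.mem_univ _, ?_, ?_⟩⟩
      · rw [Finset.coe_singleton]
        simp
      · rw [card_closedNbhd_singleton, hv, Finset.card_singleton, add_comm]
    obtain ⟨S, hSF, hmax⟩ := Finset.exists_max_image F Finset.card hF
    obtain ⟨-, hS, hcard⟩ := Finset.mem_filter.1 hSF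
    refine ⟨S, ⟨?_, hS⟩, ?_⟩
    · by_contra hdom
      obtain ⟨u, hu, hconn, hgrow⟩ := exists_insert_connected hG hS hdom
      have hins := Finset.card_insert_of_notMem hu
      have := hmax (insert u S) (Finset.mem_filter.2 ⟨Finset.mem_univ _, hconn, by omega⟩)
      omega
    · have := (closedNbhd G S).card_le_univ
      omega
  refine ⟨key, ?_⟩
  obtain ⟨S, hS, hle⟩ := key
  have hmem : S.card ∈ {n : ℕ | ∃ S : Finset V, IsConnectedDominatingSet G S ∧ S.card = n} :=
    ⟨S, hS, rfl⟩
  exact (Nat.sInf_le hmem).trans hle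
end

section
/- Let G be a finite graph with distinct vertices a, b, c, and let G' be the graph obtained from G by adding three new vertices e, f, g together with the edges ef, fg, eg, ae, af, bf, bg, ce, cg (and no other new edges). If S is a connected dominating set of G containing at least one of a, b, c, then G' has a connected dominating set of size |S| + 1. -/
/-- The graph `G` extended by a triangle `e f g` (encoded as `Sum.inr 0`, `Sum.inr 1`,
`Sum.inr 2`) attached via the edges `ae, af, bf, bg, ce, cg`. -/
def extGraph {V : Type*} (G : SimpleGraph V) (a b c : V) : SimpleGraph (V ⊕ Fin 3) :=
  SimpleGraph.fromRel (fun x y =>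
    match x, y with
    | Sum.inl u, Sum.inl u' => G.Adj u u'
    | Sum.inl u, Sum.inr i =>
        (u = a ∧ (i = 0 ∨ i = 1)) ∨ (u = b ∧ (i = 1 ∨ i = 2)) ∨ (u = c ∧ (i = 0 ∨ i = 2))
    | Sum.inr _, Sum.inr _ => True
    | _, _ => False)

theorem extGraph_adj_inl {V : Type*} {G : SimpleGraph V} {a b c u v : V} (h : G.Adj u v) :
    (extGraph G a b c).Adj (Sum.inl u) (Sum.inl v) := by
  simp [extGraph, h, h.ne]

theorem extGraph_adj_inr {V : Type*} {G : SimpleGraph V} {a b c : V} {i j : Fin 3} (h : i ≠ j) :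
    (extGraph G a b c).Adj (Sum.inr i) (Sum.inr j) := by
  simp [extGraph, h]

/-- A connected dominating set of `G` together with any triangle vertex adjacent to one of its
members is a connected dominating set of the extended graph. -/
theorem exists_isConnectedDominatingSet_extGraph {V : Type*} (G : SimpleGraph V)
    (a b c : V) (S : Finset V) (hS : IsConnectedDominatingSet G S) (u : V) (hu : u ∈ S)
    (i : Fin 3) (hui : (extGraph G a b c).Adj (Sum.inl u) (Sum.inr i)) :
    ∃ S' : Finset (V ⊕ Fin 3),
      IsConnectedDominatingSet (extGraph G a b c) S' ∧ S'.card = S.card + 1 := by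
  obtain ⟨hdom, hconn⟩ := hS
  refine ⟨S.disjSum {i}, ⟨?_, ?_⟩, by simp⟩
  · rintro (v | j)
    · rcases hdom v with hv | ⟨w, hw, hwv⟩
      · exact Or.inl (by simpa using hv)
      · exact Or.inr ⟨Sum.inl w, by simpa using hw, extGraph_adj_inl hwv⟩
    · by_cases hij : i = j
      · exact Or.inl (by simp [hij])
      · exact Or.inr ⟨Sum.inr i, by simp, extGraph_adj_inr hij⟩
  · have hset : ((S.disjSum {i} : Finset (V ⊕ Fin 3)) : Set (V ⊕ Fin 3)) =
        Sum.inl '' (S : Set V) ∪ {Sum.inr i} := by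
      ext (v | j) <;> simp
    rw [hset]
    let φ : G →g extGraph G a b c := ⟨Sum.inl, extGraph_adj_inl⟩
    let ψ : G.induce (S : Set V) →g (extGraph G a b c).induce (Sum.inl '' (S : Set V)) :=
      SimpleGraph.induceHom φ (Set.mapsTo_image _ _)
    have hψ : Function.Surjective ψ := by
      rintro ⟨_, v, hv, rfl⟩
      exact ⟨⟨v, hv⟩, rfl⟩
    have himage := hconn.map ψ hψ
    have hsingle : ((extGraph G a b c).induce {(Sum.inr i : V ⊕ Fin 3)}).Connected :=
      SimpleGraph.Connected.of_subsingleton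
    exact SimpleGraph.connected_induce_union himage.preconnected hsingle.preconnected
      (Set.mem_image_of_mem _ hu) rfl hui

theorem stmt_9 {V : Type*} [Fintype V] [DecidableEq V] (G : SimpleGraph V)
    (a b c : V) (hab : a ≠ b) (hac : a ≠ c) (hbc : b ≠ c)
    (S : Finset V) (hS : IsConnectedDominatingSet G S)
    (hmem : a ∈ S ∨ b ∈ S ∨ c ∈ S) :
    ∃ S' : Finset (V ⊕ Fin 3),
      IsConnectedDominatingSet (extGraph G a b c) S' ∧ S'.card = S.card + 1 := by
  rcases hmem with h | h | h
  · exact exists_isConnectedDominatingSet_extGraph G a b c S hS a h 0 (by simp [extGraph])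
  · exact exists_isConnectedDominatingSet_extGraph G a b c S hS b h 1 (by simp [extGraph])
  · exact exists_isConnectedDominatingSet_extGraph G a b c S hS c h 2 (by simp [extGraph])
end
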